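/- For each P/T Petri net N = (S, A, T), structure-preserving bisimilarity ~sp is an equivalence relation on the set of markings of N (it is reflexive, symmetric, and transitive). -/

import Mathlib

/-- A transition of a P/T net: a triple (pre-set, label, post-set). -/
structure PNTrans (S A : Type) where
  pre : Multiset S
  label : A
  post : Multiset S
deriving DecidableEq

/-- A P/T Petri net over places `S` and labels `A`: a finite set of transitions,
each with a nonempty pre-set. -/
structure PetriNet (S A : Type) [DecidableEq S] [DecidableEq A] where
  T : Finset (PNTrans S A)
  pre_ne : ∀ t ∈ T, t.pre ≠ 0

/-- The additive closure `R⊕` of a place relation `R`: the least relation on markings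
containing `(θ, θ)` and closed under adding `R`-related places on both sides. -/
inductive AddClosure {S : Type} (R : S → S → Prop) : Multiset S → Multiset S → Prop
  | zero : AddClosure R 0 0
  | cons {s1 s2 : S} {m1 m2 : Multiset S} :
      R s1 s2 → AddClosure R m1 m2 → AddClosure R (s1 ::ₘ m1) (s2 ::ₘ m2)

/-- `Fires N m t m'` : transition `t` of `N` is enabled at marking `m` and its firing
produces `m' = (m ⊖ pre(t)) ⊕ post(t)`. -/
def Fires {S A : Type} [DecidableEq S] [DecidableEq A]
    (N : PetriNet S A) (m : Multiset S) (t : PNTrans S A) (m' : Multiset S) : Prop :=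
  t ∈ N.T ∧ t.pre ≤ m ∧ m' = m - t.pre + t.post

/-- A place bisimulation on `N`. -/
def IsPlaceBisim {S A : Type} [DecidableEq S] [DecidableEq A]
    (N : PetriNet S A) (R : S → S → Prop) : Prop :=
  ∀ m1 m2, AddClosure R m1 m2 →
    (∀ t1 m1', Fires N m1 t1 m1' →
      ∃ t2 m2', Fires N m2 t2 m2' ∧ AddClosure R t1.pre t2.pre ∧
        t1.label = t2.label ∧ AddClosure R t1.post t2.post ∧ AddClosure R m1' m2') ∧
    (∀ t2 m2', Fires N m2 t2 m2' →
      ∃ t1 m1', Fires N m1 t1 m1' ∧ AddClosure R t1.pre t2.pre ∧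
        t1.label = t2.label ∧ AddClosure R t1.post t2.post ∧ AddClosure R m1' m2')

/-- Place bisimilarity `m1 ~p m2`. -/
def PlaceBisimilar {S A : Type} [DecidableEq S] [DecidableEq A]
    (N : PetriNet S A) (m1 m2 : Multiset S) : Prop :=
  ∃ R : S → S → Prop, IsPlaceBisim N R ∧ AddClosure R m1 m2

/-- An interleaving bisimulation on the markings of `N`. -/
def IsIntBisim {S A : Type} [DecidableEq S] [DecidableEq A]
    (N : PetriNet S A) (Q : Multiset S → Multiset S → Prop) : Prop :=
  ∀ m1 m2, Q m1 m2 →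
    (∀ t1 m1', Fires N m1 t1 m1' →
      ∃ t2 m2', Fires N m2 t2 m2' ∧ t1.label = t2.label ∧ Q m1' m2') ∧
    (∀ t2 m2', Fires N m2 t2 m2' →
      ∃ t1 m1', Fires N m1 t1 m1' ∧ t1.label = t2.label ∧ Q m1' m2')

/-- Interleaving bisimilarity `m1 ~int m2`. -/
def IntBisimilar {S A : Type} [DecidableEq S] [DecidableEq A]
    (N : PetriNet S A) (m1 m2 : Multiset S) : Prop :=
  ∃ Q, IsIntBisim N Q ∧ Q m1 m2

/-- First projection of a linking. -/
def lproj1 {S : Type} (l : Multiset (S × S)) : Multiset S := l.map Prod.fst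

/-- Second projection of a linking. -/
def lproj2 {S : Type} (l : Multiset (S × S)) : Multiset S := l.map Prod.snd

/-- A structure-preserving bisimulation on `N`: a set of linkings. -/
def IsSpBisim {S A : Type} [DecidableEq S] [DecidableEq A]
    (N : PetriNet S A) (R : Set (Multiset (S × S))) : Prop :=
  ∀ l ∈ R, ∀ c ≤ l,
    (∀ t1 ∈ N.T, t1.pre = lproj1 c →
      ∃ t2 ∈ N.T, t1.label = t2.label ∧ t2.pre = lproj2 c ∧
        ∃ cb : Multiset (S × S), t1.post = lproj1 cb ∧ t2.post = lproj2 cb ∧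
          l - c + cb ∈ R) ∧
    (∀ t2 ∈ N.T, t2.pre = lproj2 c →
      ∃ t1 ∈ N.T, t1.label = t2.label ∧ t1.pre = lproj1 c ∧
        ∃ cb : Multiset (S × S), t1.post = lproj1 cb ∧ t2.post = lproj2 cb ∧
          l - c + cb ∈ R)

/-- Structure-preserving bisimilarity `m1 ~sp m2`. -/
def SpBisimilar {S A : Type} [DecidableEq S] [DecidableEq A]
    (N : PetriNet S A) (m1 m2 : Multiset S) : Prop :=
  ∃ (R : Set (Multiset (S × S))) (l : Multiset (S × S)),
    IsSpBisim N R ∧ l ∈ R ∧ lproj1 l = m1 ∧ lproj2 l = m2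

/-! The symmetric half of a structure-preserving bisimulation is the simulation condition for the
converse set of linkings, so a bisimulation is a simulation whose converse is one too. Simulations
are preserved by composition: two linkings that agree on the middle marking are glued into a
multiset of triples of places, and an answer to a firing is obtained by passing through the middle
component. Since taking converses reverses compositions, bisimulations compose as well. -/

section Multiset

variable {α β γ : Type*}

theorem exists_add_of_map_eq_add {f : α → β} {s : Multiset α} {t u : Multiset β}
    (h : s.map f = t + u) : ∃ t' u', s = t' + u' ∧ t'.map f = t ∧ u'.map f = u := by
  rw [← Multiset.rel_eq, Multiset.rel_map_left, Multiset.rel_add_right] at h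
  obtain ⟨t', u', ht, hu, rfl⟩ := h
  exact ⟨t', u', rfl, Multiset.rel_eq.mp (Multiset.rel_map_left.mpr ht),
    Multiset.rel_eq.mp (Multiset.rel_map_left.mpr hu)⟩

theorem exists_triples_of_map_snd_eq_map_fst {s : Multiset (α × β)} {t : Multiset (β × γ)}
    (h : s.map Prod.snd = t.map Prod.fst) :
    ∃ w : Multiset (α × β × γ), w.map (Prod.map id Prod.fst) = s ∧ w.map Prod.snd = t := by
  classical
  induction s using Multiset.induction_on generalizing t with
  | empty => exact ⟨0, rfl, by simpa [eq_comm] using h⟩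
  | cons p s ih =>
    rw [Multiset.map_cons, eq_comm, ← Multiset.map_eq_cons] at h
    obtain ⟨q, hq, hqp, hrest⟩ := h
    obtain ⟨w, hws, hwt⟩ := ih hrest.symm
    exact ⟨(p.1, q) ::ₘ w, by simp [hws, hqp], by simp [hwt, Multiset.cons_erase hq]⟩

end Multiset

section Linkings

variable {α β γ : Type*}

/-- The diagonal linkings, which link every token to a token in the same place. They witness
reflexivity of bisimilarity. -/
def diagonalLinkings (α : Type*) : Set (Multiset (α × α)) :=
  {l | ∀ p ∈ l, p.1 = p.2}

/-- The converse of a set of linkings, obtained by reversing every link. -/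
def converseLinkings (R : Set (Multiset (α × β))) : Set (Multiset (β × α)) :=
  {l | l.map Prod.swap ∈ R}

/-- The composition of two sets of linkings. Linkings do not compose uniquely, as tokens in the same
middle place can be matched up in several ways; a multiset of triples records one such matching. -/
def compLinkings (R₁ : Set (Multiset (α × β))) (R₂ : Set (Multiset (β × γ))) :
    Set (Multiset (α × γ)) :=
  {l | ∃ w : Multiset (α × β × γ), w.map (Prod.map id Prod.fst) ∈ R₁ ∧ w.map Prod.snd ∈ R₂ ∧
    w.map (Prod.map id Prod.snd) = l}

theorem converseLinkings_diagonalLinkings :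
    converseLinkings (diagonalLinkings α) = diagonalLinkings α := by
  ext l
  simp only [converseLinkings, diagonalLinkings, Set.mem_ofPred_eq, Multiset.forall_mem_map_iff,
    Prod.fst_swap, Prod.snd_swap]
  exact forall₂_congr fun _ _ => eq_comm

theorem converseLinkings_converseLinkings (R : Set (Multiset (α × β))) :
    converseLinkings (converseLinkings R) = R := by
  ext l
  simp [converseLinkings]

theorem compLinkings_converseLinkings_subset (R₁ : Set (Multiset (α × β)))
    (R₂ : Set (Multiset (β × γ))) :
    compLinkings (converseLinkings R₂) (converseLinkings R₁) ⊆
      converseLinkings (compLinkings R₁ R₂) := by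
  rintro _ ⟨w, hw₂, hw₁, rfl⟩
  refine ⟨w.map fun x => (x.2.2, x.2.1, x.1), ?_, ?_, ?_⟩
  · simpa [converseLinkings, Prod.map, Prod.swap, Function.comp_def] using hw₁
  · simpa [converseLinkings, Prod.map, Prod.swap, Function.comp_def] using hw₂
  · simp [Prod.map]

theorem converseLinkings_compLinkings (R₁ : Set (Multiset (α × β)))
    (R₂ : Set (Multiset (β × γ))) :
    converseLinkings (compLinkings R₁ R₂) =
      compLinkings (converseLinkings R₂) (converseLinkings R₁) := by
  refine Set.Subset.antisymm (fun l hl => ?_) (compLinkings_converseLinkings_subset R₁ R₂)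
  have h := compLinkings_converseLinkings_subset (converseLinkings R₂) (converseLinkings R₁)
  simp only [converseLinkings_converseLinkings] at h
  simpa [converseLinkings] using h hl

end Linkings

section Projections

variable {S : Type}

@[simp]
theorem lproj1_map_swap (l : Multiset (S × S)) : lproj1 (l.map Prod.swap) = lproj2 l := by
  simp [lproj1, lproj2]

@[simp]
theorem lproj2_map_swap (l : Multiset (S × S)) : lproj2 (l.map Prod.swap) = lproj1 l := by
  simp [lproj1, lproj2]

theorem lproj1_eq_lproj2_of_mem_diagonalLinkings {l : Multiset (S × S)}
    (hl : l ∈ diagonalLinkings S) : lproj1 l = lproj2 l :=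
  Multiset.map_congr rfl hl

theorem exists_mem_diagonalLinkings (m : Multiset S) :
    ∃ l ∈ diagonalLinkings S, lproj1 l = m ∧ lproj2 l = m :=
  ⟨m.map fun s => (s, s), by simp +contextual [diagonalLinkings], by simp [lproj1],
    by simp [lproj2]⟩

theorem lproj2_map_prodMap_id_fst (w : Multiset (S × S × S)) :
    lproj2 (w.map (Prod.map id Prod.fst)) = lproj1 (w.map Prod.snd) := by
  simp [lproj1, lproj2]

theorem lproj1_map_prodMap_id_snd (w : Multiset (S × S × S)) :
    lproj1 (w.map (Prod.map id Prod.snd)) = lproj1 (w.map (Prod.map id Prod.fst)) := by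
  simp [lproj1]

theorem lproj2_map_prodMap_id_snd (w : Multiset (S × S × S)) :
    lproj2 (w.map (Prod.map id Prod.snd)) = lproj2 (w.map Prod.snd) := by
  simp [lproj2]

end Projections

section Bisimulation

variable {S A : Type} [DecidableEq S] [DecidableEq A] {N : PetriNet S A}
  {R R₁ R₂ : Set (Multiset (S × S))}

/-- A structure-preserving simulation: the half of `IsSpBisim` in which the second marking answers
firings from the first. The linking is written as `c + r`, with `r` the part not involved in the
firing, so that no truncated subtraction occurs. -/
def IsSpSim (N : PetriNet S A) (R : Set (Multiset (S × S))) : Prop :=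
  ∀ c r, c + r ∈ R → ∀ t₁ ∈ N.T, t₁.pre = lproj1 c →
    ∃ t₂ ∈ N.T, t₁.label = t₂.label ∧ t₂.pre = lproj2 c ∧
      ∃ c', t₁.post = lproj1 c' ∧ t₂.post = lproj2 c' ∧ r + c' ∈ R

theorem isSpSim_converseLinkings_iff : IsSpSim N (converseLinkings R) ↔
    ∀ c r, c + r ∈ R → ∀ t₂ ∈ N.T, t₂.pre = lproj2 c →
      ∃ t₁ ∈ N.T, t₁.label = t₂.label ∧ t₁.pre = lproj1 c ∧
        ∃ c', t₁.post = lproj1 c' ∧ t₂.post = lproj2 c' ∧ r + c' ∈ R := by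
  have hswap : Function.Surjective (Multiset.map (Prod.swap : S × S → S × S)) :=
    Multiset.map_surjective_of_surjective Prod.swap_surjective
  rw [IsSpSim, hswap.forall₂]
  refine forall₂_congr fun c r => imp_congr (by simp [converseLinkings]) <|
    forall₂_congr fun t₂ _ => imp_congr (by simp) <| exists_congr fun t₁ =>
    and_congr_right' <| and_congr eq_comm <| and_congr (by simp) ?_
  rw [hswap.exists]
  simp [converseLinkings, and_left_comm]

theorem isSpBisim_iff : IsSpBisim N R ↔ IsSpSim N R ∧ IsSpSim N (converseLinkings R) := by
  rw [isSpSim_converseLinkings_iff]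
  constructor
  · intro h
    have hsplit (c r : Multiset (S × S)) (hcr : c + r ∈ R) :=
      h _ hcr c (Multiset.le_add_right c r)
    simp only [add_tsub_cancel_left] at hsplit
    exact ⟨fun c r hcr => (hsplit c r hcr).1, fun c r hcr => (hsplit c r hcr).2⟩
  · rintro ⟨hsim, hconv⟩ l hl c hc
    obtain ⟨r, rfl⟩ := Multiset.le_iff_exists_add.mp hc
    rw [add_tsub_cancel_left]
    exact ⟨hsim c r hl, hconv c r hl⟩

theorem isSpSim_diagonalLinkings (N : PetriNet S A) : IsSpSim N (diagonalLinkings S) := by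
  intro c r hcr t ht hpre
  have hc : c ∈ diagonalLinkings S := fun p hp => hcr p (Multiset.mem_add.mpr (.inl hp))
  have hr : r ∈ diagonalLinkings S := fun p hp => hcr p (Multiset.mem_add.mpr (.inr hp))
  obtain ⟨c', hc', hpost₁, hpost₂⟩ := exists_mem_diagonalLinkings t.post
  exact ⟨t, ht, rfl, hpre.trans (lproj1_eq_lproj2_of_mem_diagonalLinkings hc), c', hpost₁.symm,
    hpost₂.symm, fun p hp => (Multiset.mem_add.mp hp).elim (hr p) (hc' p)⟩

theorem IsSpSim.comp (h₁ : IsSpSim N R₁) (h₂ : IsSpSim N R₂) :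
    IsSpSim N (compLinkings R₁ R₂) := by
  rintro c r ⟨w, hw₁, hw₂, hw⟩ t₁ ht₁ hpre₁
  obtain ⟨wc, wr, rfl, rfl, rfl⟩ := exists_add_of_map_eq_add hw
  rw [Multiset.map_add] at hw₁ hw₂
  rw [lproj1_map_prodMap_id_snd] at hpre₁
  obtain ⟨t₂, ht₂, hlabel₁₂, hpre₂, c₁, hpost₁, hpost₂, hc₁⟩ := h₁ _ _ hw₁ t₁ ht₁ hpre₁
  rw [lproj2_map_prodMap_id_fst] at hpre₂
  obtain ⟨t₃, ht₃, hlabel₂₃, hpre₃, c₂, hpost₂', hpost₃, hc₂⟩ := h₂ _ _ hw₂ t₂ ht₂ hpre₂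
  obtain ⟨w', rfl, rfl⟩ := exists_triples_of_map_snd_eq_map_fst (hpost₂.symm.trans hpost₂')
  refine ⟨t₃, ht₃, hlabel₁₂.trans hlabel₂₃, ?_, w'.map (Prod.map id Prod.snd), ?_, ?_,
    wr + w', ?_, ?_, Multiset.map_add _ _ _⟩
  · rwa [lproj2_map_prodMap_id_snd]
  · rwa [lproj1_map_prodMap_id_snd]
  · rwa [lproj2_map_prodMap_id_snd]
  · rwa [Multiset.map_add]
  · rwa [Multiset.map_add]

theorem isSpBisim_diagonalLinkings (N : PetriNet S A) : IsSpBisim N (diagonalLinkings S) := by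
  rw [isSpBisim_iff, converseLinkings_diagonalLinkings, and_self]
  exact isSpSim_diagonalLinkings N

theorem IsSpBisim.converse (h : IsSpBisim N R) : IsSpBisim N (converseLinkings R) := by
  rwa [isSpBisim_iff, converseLinkings_converseLinkings, and_comm, ← isSpBisim_iff]

theorem IsSpBisim.comp (h₁ : IsSpBisim N R₁) (h₂ : IsSpBisim N R₂) :
    IsSpBisim N (compLinkings R₁ R₂) := by
  rw [isSpBisim_iff] at h₁ h₂ ⊢
  rw [converseLinkings_compLinkings]
  exact ⟨h₁.1.comp h₂.1, h₂.2.comp h₁.2⟩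

end Bisimulation

namespace SpBisimilar

variable {S A : Type} [DecidableEq S] [DecidableEq A] {N : PetriNet S A}
  {m₁ m₂ m₃ : Multiset S}

protected theorem refl (N : PetriNet S A) (m : Multiset S) : SpBisimilar N m m := by
  obtain ⟨l, hl, hl₁, hl₂⟩ := exists_mem_diagonalLinkings m
  exact ⟨diagonalLinkings S, l, isSpBisim_diagonalLinkings N, hl, hl₁, hl₂⟩

protected theorem symm (h : SpBisimilar N m₁ m₂) : SpBisimilar N m₂ m₁ := by
  obtain ⟨R, l, hR, hl, rfl, rfl⟩ := h
  exact ⟨converseLinkings R, l.map Prod.swap, hR.converse, by simpa [converseLinkings] using hl,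
    lproj1_map_swap l, lproj2_map_swap l⟩

protected theorem trans (h₁₂ : SpBisimilar N m₁ m₂) (h₂₃ : SpBisimilar N m₂ m₃) :
    SpBisimilar N m₁ m₃ := by
  obtain ⟨R₁, l₁, hR₁, hl₁, rfl, hmid⟩ := h₁₂
  obtain ⟨R₂, l₂, hR₂, hl₂, rfl, rfl⟩ := h₂₃
  obtain ⟨w, rfl, rfl⟩ := exists_triples_of_map_snd_eq_map_fst hmid
  exact ⟨compLinkings R₁ R₂, w.map (Prod.map id Prod.snd), hR₁.comp hR₂, ⟨w, hl₁, hl₂, rfl⟩,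
    lproj1_map_prodMap_id_snd w, lproj2_map_prodMap_id_snd w⟩

end SpBisimilar

theorem spBisimilar_equivalence_general {S A : Type} [DecidableEq S] [DecidableEq A]
    (N : PetriNet S A) : Equivalence (SpBisimilar N) :=
  ⟨SpBisimilar.refl N, SpBisimilar.symm, SpBisimilar.trans⟩

/-- structure-preserving bisimilarity is an equivalence relation on
markings. -/
theorem spBisimilar_equivalence {S A : Type} [Fintype S] [Fintype A]
    [DecidableEq S] [DecidableEq A] (N : PetriNet S A) :
    Equivalence (SpBisimilar N) := by
  exact spBisimilar_equivalence_general N
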